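/- arXiv:2507.06225 — 2 statements merged into one kernel-verified Lean document; each statement's English description precedes it below -/
import Mathlib

section
/- Let M be a matroid of rank 3. Then M is sparse paving if and only if M is simple and every cyclic hyperplane of M has exactly 3 elements. -/
open scoped BigOperators TensorProduct

namespace MatroidGame

/-- A "pre-matroid": a finite ground set together with a distinguished collection of
finsets (intended to be the bases). -/
structure PreMatroid (α : Type*) where
  E : Finset α
  bases : Finset (Finset α)

namespace PreMatroid

variable {α : Type*} [DecidableEq α]

/-- The paper's definition of a matroid: a nonempty collection of `r`-element subsets of the
ground set satisfying the basis exchange axiom. -/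
def IsMatroid (M : PreMatroid α) : Prop :=
  M.bases.Nonempty ∧
    (∀ B ∈ M.bases, B ⊆ M.E) ∧
    (∀ B₁ ∈ M.bases, ∀ B₂ ∈ M.bases, B₁.card = B₂.card) ∧
    (∀ B₁ ∈ M.bases, ∀ B₂ ∈ M.bases, ∀ a ∈ B₁ \ B₂,
      ∃ b ∈ B₂ \ B₁, insert b (B₁.erase a) ∈ M.bases)

/-- A set is independent if it is contained in a basis. -/
def Indep (M : PreMatroid α) (I : Finset α) : Prop :=
  ∃ B ∈ M.bases, I ⊆ B

instance (M : PreMatroid α) : DecidablePred M.Indep := fun I =>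
  inferInstanceAs (Decidable (∃ B ∈ M.bases, I ⊆ B))

/-- The rank of a subset: the maximal size of an independent subset of it. -/
def rkSet (M : PreMatroid α) (X : Finset α) : ℕ :=
  (X.powerset.filter fun I => M.Indep I).sup Finset.card

/-- The rank of the matroid. -/
def rk (M : PreMatroid α) : ℕ := M.rkSet M.E

/-- A circuit is a minimal dependent subset of the ground set. -/
def Circuit (M : PreMatroid α) (C : Finset α) : Prop :=
  C ⊆ M.E ∧ ¬M.Indep C ∧ ∀ D ⊂ C, M.Indep D

/-- A matroid is paving if every circuit has size at least the rank. -/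
def Paving (M : PreMatroid α) : Prop := ∀ C, M.Circuit C → M.rk ≤ C.card

/-- The dual matroid: bases are complements of bases. -/
def dual (M : PreMatroid α) : PreMatroid α := ⟨M.E, M.bases.image fun B => M.E \ B⟩

/-- A matroid is sparse paving if both it and its dual are paving. -/
def SparsePaving (M : PreMatroid α) : Prop := M.Paving ∧ M.dual.Paving

/-- The closure of a set. -/
def cl (M : PreMatroid α) (X : Finset α) : Finset α :=
  M.E.filter fun b => M.rkSet (insert b X) = M.rkSet X

/-- A flat is a closed subset. -/
def IsFlat (M : PreMatroid α) (F : Finset α) : Prop := F ⊆ M.E ∧ M.cl F = F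

/-- A hyperplane is a flat of rank `rk M - 1`. -/
def IsHyperplane (M : PreMatroid α) (H : Finset α) : Prop :=
  M.IsFlat H ∧ M.rkSet H = M.rk - 1

/-- A cyclic hyperplane is a hyperplane which is a union of circuits. -/
def IsCyclicHyperplane (M : PreMatroid α) (H : Finset α) : Prop :=
  M.IsHyperplane H ∧ ∀ x ∈ H, ∃ C, M.Circuit C ∧ C ⊆ H ∧ x ∈ C

/-- A loop is a ground set element contained in no basis. -/
def IsLoop (M : PreMatroid α) (a : α) : Prop := a ∈ M.E ∧ ∀ B ∈ M.bases, a ∉ B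

/-- A coloop is a ground set element contained in every basis. -/
def IsColoop (M : PreMatroid α) (a : α) : Prop := a ∈ M.E ∧ ∀ B ∈ M.bases, a ∈ B

def Loopless (M : PreMatroid α) : Prop := ∀ a, ¬M.IsLoop a

/-- A matroid is simple if it has no loops and every rank-1 subset is a singleton. -/
def Simple (M : PreMatroid α) : Prop :=
  M.Loopless ∧ ∀ X ⊆ M.E, M.rkSet X = 1 → X.card = 1

/-- The restriction `M | Y`: its independent sets are the independent sets of `M` contained
in `Y`, and its bases are the maximal such sets. -/
def restrict (M : PreMatroid α) (Y : Finset α) : PreMatroid α :=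
  ⟨Y, Y.powerset.filter fun B =>
      M.Indep B ∧ ∀ I ∈ Y.powerset, M.Indep I → B ⊆ I → I = B⟩

/-- `M` is the free extension of `N` by the new element `e`. -/
def IsFreeExtension (M N : PreMatroid α) (e : α) : Prop :=
  e ∉ N.E ∧ M.E = insert e N.E ∧
    ∀ B : Finset α, B ∈ M.bases ↔
      (B ∈ N.bases ∨ ∃ A : Finset α, N.Indep A ∧ A.card = N.rk - 1 ∧ B = insert e A)

/-- The uniform matroid of rank `k` on the ground set `E`. -/
def uniform {β : Type*} (E : Finset β) (k : ℕ) : PreMatroid β := ⟨E, E.powersetCard k⟩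

/-- The direct sum of two matroids. -/
def directSum {β γ : Type*} [DecidableEq β] [DecidableEq γ] (M : PreMatroid β)
    (N : PreMatroid γ) : PreMatroid (β ⊕ γ) :=
  ⟨M.E.map ⟨Sum.inl, Sum.inl_injective⟩ ∪ N.E.map ⟨Sum.inr, Sum.inr_injective⟩,
    (M.bases ×ˢ N.bases).image fun p =>
      p.1.map ⟨Sum.inl, Sum.inl_injective⟩ ∪ p.2.map ⟨Sum.inr, Sum.inr_injective⟩⟩

/-- `φ` realizes an isomorphism of matroids: it is a bijection of the ground sets such that a
subset of the ground set is a basis iff its image is a basis. -/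
def IsIsoMap {β γ : Type*} [DecidableEq γ] (M : PreMatroid β) (N : PreMatroid γ)
    (φ : β → γ) : Prop :=
  Set.BijOn φ ↑M.E ↑N.E ∧ ∀ B ⊆ M.E, (B ∈ M.bases ↔ B.image φ ∈ N.bases)

/-- Two matroids are isomorphic. -/
def Iso {β γ : Type*} [DecidableEq γ] (M : PreMatroid β) (N : PreMatroid γ) : Prop :=
  ∃ φ : β → γ, M.IsIsoMap N φ

end PreMatroid

/-- The pointed sets `S•`: pairs `(A, p)` with `A ∈ S` and `p ∈ A`. -/
abbrev PtSet {α : Type*} (S : Finset (Finset α)) : Type _ :=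
  {v : Finset α × α // v.1 ∈ S ∧ v.2 ∈ v.1}

/-- The relation `rel` on pointed sets, valued in `{0,1,2,3}`. -/
def relNum {α : Type*} [DecidableEq α] (a b : Finset α × α) : ℕ :=
  if a.1 = b.1 then (if a.2 = b.2 then 0 else 2) else (if a.2 = b.2 then 1 else 3)

/-- `S` covers the ground set `E` if every element of `E` lies in a member of `S`. -/
def Covers {α : Type*} (S : Finset (Finset α)) (E : Finset α) : Prop :=
  ∀ a ∈ E, ∃ A ∈ S, a ∈ A

noncomputable section

/-- The defining relations of the quantum isomorphism (magic unitary) algebra `𝔖(I,J)`. -/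
inductive MagicRel (I J : Type*) [Fintype I] [Fintype J] :
    FreeAlgebra ℂ (I × J) → FreeAlgebra ℂ (I × J) → Prop
  | idem (a : I) (x : J) :
      MagicRel I J (FreeAlgebra.ι ℂ (a, x) * FreeAlgebra.ι ℂ (a, x)) (FreeAlgebra.ι ℂ (a, x))
  | row (a : I) {x y : J} (h : x ≠ y) :
      MagicRel I J (FreeAlgebra.ι ℂ (a, x) * FreeAlgebra.ι ℂ (a, y)) 0
  | col {a b : I} (x : J) (h : a ≠ b) :
      MagicRel I J (FreeAlgebra.ι ℂ (a, x) * FreeAlgebra.ι ℂ (b, x)) 0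
  | rowSum (a : I) : MagicRel I J (∑ x : J, FreeAlgebra.ι ℂ (a, x)) 1
  | colSum (x : J) : MagicRel I J (∑ a : I, FreeAlgebra.ι ℂ (a, x)) 1

/-- The quantum isomorphism algebra `𝔖(I,J)`. -/
abbrev MagicAlgebra (I J : Type*) [Fintype I] [Fintype J] := RingQuot (MagicRel I J)

/-- The generator `u_{a x}` of `𝔖(I,J)`. -/
def magicGen (I J : Type*) [Fintype I] [Fintype J] (a : I) (x : J) : MagicAlgebra I J :=
  RingQuot.mkAlgHom ℂ (MagicRel I J) (FreeAlgebra.ι ℂ (a, x))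

/-- The defining relations of the isomorphism algebra: magic unitary relations together with
`u_{a x} u_{b y} = 0` whenever `rel(a,b) ≠ rel(x,y)`. -/
inductive IsoRel (I J : Type*) [Fintype I] [Fintype J] (rI : I → I → ℕ) (rJ : J → J → ℕ) :
    FreeAlgebra ℂ (I × J) → FreeAlgebra ℂ (I × J) → Prop
  | magic {u v : FreeAlgebra ℂ (I × J)} : MagicRel I J u v → IsoRel I J rI rJ u v
  | mismatch (a b : I) (x y : J) (h : rI a b ≠ rJ x y) :
      IsoRel I J rI rJ (FreeAlgebra.ι ℂ (a, x) * FreeAlgebra.ι ℂ (b, y)) 0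

/-- The generic isomorphism algebra for two relation-valued structures. -/
abbrev IsoAlgebra (I J : Type*) [Fintype I] [Fintype J] (rI : I → I → ℕ)
    (rJ : J → J → ℕ) :=
  RingQuot (IsoRel I J rI rJ)

/-- The generator `u_{a x}` of the isomorphism algebra. -/
def isoGen (I J : Type*) [Fintype I] [Fintype J] (rI : I → I → ℕ) (rJ : J → J → ℕ)
    (a : I) (x : J) : IsoAlgebra I J rI rJ :=
  RingQuot.mkAlgHom ℂ (IsoRel I J rI rJ) (FreeAlgebra.ι ℂ (a, x))

/-- `rel` as a function on pointed sets. -/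
abbrev ptRel {α : Type*} [DecidableEq α] (S : Finset (Finset α)) : PtSet S → PtSet S → ℕ :=
  fun a b => relNum a.val b.val

/-- The isomorphism `∗`-algebra `𝔄•(M,N,S)` associated to the matroid isomorphism game,
presented by magic unitary relations on pointed sets plus the `rel` mismatch relations. -/
abbrev MatIsoAlgebra {α β : Type*} [Fintype α] [Fintype β] [DecidableEq α] [DecidableEq β]
    (S_M : Finset (Finset α)) (S_N : Finset (Finset β)) :=
  IsoAlgebra (PtSet S_M) (PtSet S_N) (ptRel S_M) (ptRel S_N)

/-- The generator `u_{𝔞 𝔵}` of `𝔄•(M,N,S)`. -/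
def matGen {α β : Type*} [Fintype α] [Fintype β] [DecidableEq α] [DecidableEq β]
    (S_M : Finset (Finset α)) (S_N : Finset (Finset β)) (a : PtSet S_M) (x : PtSet S_N) :
    MatIsoAlgebra S_M S_N :=
  isoGen (PtSet S_M) (PtSet S_N) (ptRel S_M) (ptRel S_N) a x

end


open PreMatroid

/-!
Both paving conditions are statements about sizes of sets. A matroid `M` of rank `r` is paving iff
all sets of fewer than `r` elements are independent, which for `r = 3` is simplicity. Circuits of
the dual are the complements of hyperplanes, and the dual has rank `|E| - r`, so the dual is paving
iff every hyperplane has at most `r` elements. If `M` is paving and `r ≥ 2`, a cyclic hyperplane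
contains a circuit and so has at least `r` elements, while a hyperplane with more than `r` elements
is cyclic, because all its `r`-element subsets are circuits.
-/

namespace PreMatroid

section Independence

variable {α : Type*} {M : PreMatroid α} {I J : Finset α}

lemma indep_of_mem_bases {B : Finset α} (hB : B ∈ M.bases) : M.Indep B :=
  ⟨B, hB, subset_rfl⟩

lemma Indep.subset (hJ : M.Indep J) (hIJ : I ⊆ J) : M.Indep I :=
  let ⟨B, hB, hJB⟩ := hJ
  ⟨B, hB, hIJ.trans hJB⟩

lemma indep_empty (hne : M.bases.Nonempty) : M.Indep ∅ :=
  let ⟨B, hB⟩ := hne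
  ⟨B, hB, B.empty_subset⟩

lemma indep_singleton_iff_not_isLoop {a : α} (ha : a ∈ M.E) : M.Indep {a} ↔ ¬M.IsLoop a := by
  simp only [Indep, IsLoop, Finset.singleton_subset_iff, ha, true_and, not_forall, not_not,
    exists_prop]

lemma exists_circuit_subset_of_not_indep (hIE : I ⊆ M.E) (hI : ¬M.Indep I) :
    ∃ C ⊆ I, M.Circuit C := by
  obtain ⟨C, hCI, hC⟩ := exists_minimal_le_of_wellFoundedLT (fun D ↦ ¬M.Indep D) I hI
  exact ⟨C, hCI, hCI.trans hIE, hC.prop, fun D hD ↦ not_not.1 (hC.not_prop_of_lt hD)⟩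

end Independence

variable {α : Type*} [DecidableEq α] {M : PreMatroid α} {I X Y : Finset α}

section Rank

lemma rkSet_le_iff {n : ℕ} : M.rkSet X ≤ n ↔ ∀ I ⊆ X, M.Indep I → I.card ≤ n := by
  simp only [rkSet, Finset.sup_le_iff, Finset.mem_filter, Finset.mem_powerset, and_imp]

lemma Indep.card_le_rkSet (hI : M.Indep I) (hIX : I ⊆ X) : I.card ≤ M.rkSet X :=
  rkSet_le_iff.1 le_rfl I hIX hI

lemma rkSet_le_card : M.rkSet X ≤ X.card :=
  rkSet_le_iff.2 fun _ hIX _ ↦ Finset.card_le_card hIX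

lemma rkSet_mono (hXY : X ⊆ Y) : M.rkSet X ≤ M.rkSet Y :=
  rkSet_le_iff.2 fun _ hIX hI ↦ hI.card_le_rkSet (hIX.trans hXY)

lemma exists_indep_subset_card_eq_rkSet (hne : M.bases.Nonempty) (X : Finset α) :
    ∃ I ⊆ X, M.Indep I ∧ I.card = M.rkSet X := by
  have h_nonempty : (X.powerset.filter fun I ↦ M.Indep I).Nonempty :=
    ⟨∅, Finset.mem_filter.2 ⟨Finset.empty_mem_powerset X, indep_empty hne⟩⟩
  obtain ⟨I, hI, hcard⟩ := Finset.exists_mem_eq_sup _ h_nonempty Finset.card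
  obtain ⟨hIX, hI⟩ := Finset.mem_filter.1 hI
  exact ⟨I, Finset.mem_powerset.1 hIX, hI, hcard.symm⟩

lemma rkSet_eq_card_iff_indep (hne : M.bases.Nonempty) : M.rkSet X = X.card ↔ M.Indep X := by
  refine ⟨fun h ↦ ?_, fun hX ↦ rkSet_le_card.antisymm (hX.card_le_rkSet subset_rfl)⟩
  obtain ⟨I, hIX, hI, hcard⟩ := exists_indep_subset_card_eq_rkSet hne X
  rwa [← Finset.eq_of_subset_of_card_le hIX (hcard.trans h).ge]

lemma isFlat_iff_forall_rkSet_lt :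
    M.IsFlat X ↔ X ⊆ M.E ∧ ∀ x ∈ M.E \ X, M.rkSet X < M.rkSet (insert x X) := by
  refine and_congr_right fun hXE ↦ ⟨fun hcl x hx ↦ ?_, fun h ↦ ?_⟩
  · obtain ⟨hxE, hxX⟩ := Finset.mem_sdiff.1 hx
    refine (rkSet_mono (Finset.subset_insert x X)).lt_of_ne fun heq ↦ hxX ?_
    exact hcl ▸ Finset.mem_filter.2 ⟨hxE, heq.symm⟩
  · have subset_cl : X ⊆ M.cl X := fun x hx ↦
      Finset.mem_filter.2 ⟨hXE hx, by rw [Finset.insert_eq_of_mem hx]⟩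
    refine Finset.Subset.antisymm (fun x hx ↦ ?_) subset_cl
    obtain ⟨hxE, heq⟩ := Finset.mem_filter.1 hx
    by_contra hxX
    exact (h x (Finset.mem_sdiff.2 ⟨hxE, hxX⟩)).ne' heq

end Rank

section PavingSimple

lemma paving_iff_forall_indep_of_card_lt :
    M.Paving ↔ ∀ I ⊆ M.E, I.card < M.rk → M.Indep I := by
  refine ⟨fun h I hIE hcard ↦ ?_, fun h C hC ↦ ?_⟩
  · by_contra hI
    obtain ⟨C, hCI, hC⟩ := exists_circuit_subset_of_not_indep hIE hI
    exact ((h C hC).trans (Finset.card_le_card hCI)).not_gt hcard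
  · by_contra! hcard
    exact hC.2.1 (h C hC.1 hcard)

lemma simple_iff_forall_indep_of_card_le_two (hne : M.bases.Nonempty) :
    M.Simple ↔ ∀ I ⊆ M.E, I.card ≤ 2 → M.Indep I := by
  refine ⟨fun ⟨h_loopless, h_rank_one⟩ I hIE hcard ↦ ?_, fun h ↦ ⟨?_, fun X hXE hrk ↦ ?_⟩⟩
  · obtain rfl | ⟨x, hx⟩ := I.eq_empty_or_nonempty
    · exact indep_empty hne
    have hx_indep : M.Indep {x} := (indep_singleton_iff_not_isLoop (hIE hx)).2 (h_loopless x)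
    have hrk_pos : 1 ≤ M.rkSet I := hx_indep.card_le_rkSet (Finset.singleton_subset_iff.2 hx)
    have hrk_le : M.rkSet I ≤ I.card := rkSet_le_card
    rw [← rkSet_eq_card_iff_indep hne]
    by_contra hrk_ne
    have := h_rank_one I hIE (by omega)
    omega
  · intro a ha
    have ha_indep := h {a} (Finset.singleton_subset_iff.2 ha.1) (by simp)
    exact (indep_singleton_iff_not_isLoop ha.1).1 ha_indep ha
  · refine le_antisymm ?_ (hrk ▸ rkSet_le_card)
    by_contra! hcard
    obtain ⟨P, hPX, hP⟩ := Finset.exists_subset_card_eq (Nat.succ_le_of_lt hcard)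
    have := (h P (hPX.trans hXE) hP.le).card_le_rkSet hPX
    omega

lemma paving_iff_simple (hne : M.bases.Nonempty) (h3 : M.rk = 3) : M.Paving ↔ M.Simple := by
  simp only [paving_iff_forall_indep_of_card_lt, simple_iff_forall_indep_of_card_le_two hne, h3,
    Nat.lt_succ_iff]

end PavingSimple

/-- A pure set system: a nonempty family of subsets of the ground set, all of the same size. This is
the setting, wider than matroids, in which hyperplanes are dual to circuits. -/
structure IsPure (M : PreMatroid α) : Prop where
  nonempty : M.bases.Nonempty
  subset_ground : ∀ B ∈ M.bases, B ⊆ M.E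
  card_eq_card : ∀ B₁ ∈ M.bases, ∀ B₂ ∈ M.bases, B₁.card = B₂.card

/-- A spanning set: one that contains a basis. Hyperplanes are the maximal non-spanning subsets of
the ground set. No inclusion of `X` in the ground set is required. -/
def Spanning (M : PreMatroid α) (X : Finset α) : Prop :=
  ∃ B ∈ M.bases, B ⊆ X

section Pure

variable {B H : Finset α}

lemma IsMatroid.isPure (hM : M.IsMatroid) : M.IsPure :=
  ⟨hM.1, hM.2.1, hM.2.2.1⟩

lemma IsPure.card_eq_rk (hM : M.IsPure) (hB : B ∈ M.bases) : B.card = M.rk := by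
  refine ((indep_of_mem_bases hB).card_le_rkSet (hM.subset_ground B hB)).antisymm ?_
  refine rkSet_le_iff.2 fun I _ ⟨B', hB', hIB'⟩ ↦ ?_
  exact (Finset.card_le_card hIB').trans_eq (hM.card_eq_card B' hB' B hB)

lemma IsPure.rkSet_le_rk (hM : M.IsPure) (X : Finset α) : M.rkSet X ≤ M.rk :=
  rkSet_le_iff.2 fun _ _ ⟨_, hB, hIB⟩ ↦ (Finset.card_le_card hIB).trans_eq (hM.card_eq_rk hB)

lemma IsPure.spanning_iff_rkSet_eq_rk (hM : M.IsPure) : M.Spanning X ↔ M.rkSet X = M.rk := by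
  constructor
  · rintro ⟨B, hB, hBX⟩
    refine (hM.rkSet_le_rk X).antisymm ?_
    exact hM.card_eq_rk hB ▸ (indep_of_mem_bases hB).card_le_rkSet hBX
  · intro hrk
    obtain ⟨I, hIX, ⟨B, hB, hIB⟩, hcard⟩ := exists_indep_subset_card_eq_rkSet hM.nonempty X
    have hIB_eq : I = B :=
      Finset.eq_of_subset_of_card_le hIB (by rw [hM.card_eq_rk hB, hcard, hrk])
    exact ⟨B, hB, hIB_eq ▸ hIX⟩

lemma IsPure.isHyperplane_iff (hM : M.IsPure) (hpos : 0 < M.rk) :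
    M.IsHyperplane H ↔
      H ⊆ M.E ∧ ¬M.Spanning H ∧ ∀ x ∈ M.E \ H, M.Spanning (insert x H) := by
  rw [IsHyperplane, isFlat_iff_forall_rkSet_lt]
  simp only [hM.spanning_iff_rkSet_eq_rk]
  constructor
  · rintro ⟨⟨hHE, hflat⟩, hrk⟩
    refine ⟨hHE, by omega, fun x hx ↦ (hM.rkSet_le_rk _).antisymm ?_⟩
    have := hflat x hx
    omega
  · rintro ⟨hHE, hH, hinsert⟩
    have hrk_lt : M.rkSet H < M.rk := (hM.rkSet_le_rk H).lt_of_ne hH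
    refine ⟨⟨hHE, fun x hx ↦ (hinsert x hx).symm ▸ hrk_lt⟩,
      (Nat.le_sub_one_of_lt hrk_lt).antisymm ?_⟩
    have hHE_ssubset : H ⊂ M.E := hHE.ssubset_of_ne fun h ↦ hH (congrArg M.rkSet h)
    obtain ⟨x, hxE, hxH⟩ := Finset.exists_of_ssubset hHE_ssubset
    obtain ⟨B, hB, hBH⟩ :=
      hM.spanning_iff_rkSet_eq_rk.2 (hinsert x (Finset.mem_sdiff.2 ⟨hxE, hxH⟩))
    calc M.rk - 1 = B.card - 1 := by rw [hM.card_eq_rk hB]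
      _ ≤ (B.erase x).card := Finset.pred_card_le_card_erase
      _ ≤ M.rkSet H := ((indep_of_mem_bases hB).subset (B.erase_subset x)).card_le_rkSet
          (Finset.subset_insert_iff.1 hBH)

end Pure

section Dual

variable {H : Finset α}

lemma IsPure.dual (hM : M.IsPure) : M.dual.IsPure where
  nonempty := hM.nonempty.image _
  subset_ground := Finset.forall_mem_image.2 fun _ _ ↦ Finset.sdiff_subset
  card_eq_card := Finset.forall_mem_image.2 fun B₁ hB₁ ↦ Finset.forall_mem_image.2 fun B₂ hB₂ ↦ by
    rw [Finset.card_sdiff_of_subset (hM.subset_ground B₁ hB₁),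
      Finset.card_sdiff_of_subset (hM.subset_ground B₂ hB₂), hM.card_eq_card B₁ hB₁ B₂ hB₂]

lemma IsPure.rk_dual_add_rk (hM : M.IsPure) : M.dual.rk + M.rk = M.E.card := by
  obtain ⟨B, hB⟩ := hM.nonempty
  rw [← hM.dual.card_eq_rk (Finset.mem_image_of_mem _ hB), ← hM.card_eq_rk hB]
  exact Finset.card_sdiff_add_card_eq_card (hM.subset_ground B hB)

lemma IsPure.dual_indep_iff_spanning_sdiff (hM : M.IsPure) (hIE : I ⊆ M.E) :
    M.dual.Indep I ↔ M.Spanning (M.E \ I) := by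
  simp only [Indep, Spanning, PreMatroid.dual, Finset.exists_mem_image]
  refine exists_congr fun B ↦ and_congr_right fun hB ↦ ?_
  simp only [Finset.subset_sdiff, hIE, hM.subset_ground B hB, true_and, disjoint_comm]

lemma IsPure.dual_circuit_sdiff_iff (hM : M.IsPure) (hHE : H ⊆ M.E) :
    M.dual.Circuit (M.E \ H) ↔ ¬M.Spanning H ∧ ∀ x ∈ M.E \ H, M.Spanning (insert x H) := by
  have indep_iff {X : Finset α} (hXE : X ⊆ M.E) : M.dual.Indep (M.E \ X) ↔ M.Spanning X := by
    rw [hM.dual_indep_iff_spanning_sdiff Finset.sdiff_subset, Finset.sdiff_sdiff_eq_self hXE]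
  have insert_iff {x : α} (hx : x ∈ M.E \ H) :
      M.dual.Indep ((M.E \ H).erase x) ↔ M.Spanning (insert x H) := by
    rw [← Finset.sdiff_insert,
      indep_iff (Finset.insert_subset (Finset.mem_sdiff.1 hx).1 hHE)]
  constructor
  · rintro ⟨-, hdep, hmin⟩
    exact ⟨mt (indep_iff hHE).2 hdep,
      fun x hx ↦ (insert_iff hx).1 (hmin _ (Finset.erase_ssubset hx))⟩
  · rintro ⟨hH, hinsert⟩
    refine ⟨Finset.sdiff_subset, mt (indep_iff hHE).1 hH, fun D hD ↦ ?_⟩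
    obtain ⟨x, hx, hDx⟩ := Finset.ssubset_iff_exists_subset_erase.1 hD
    exact ((insert_iff hx).2 (hinsert x hx)).subset hDx

lemma IsPure.isHyperplane_iff_dual_circuit (hM : M.IsPure) (hpos : 0 < M.rk) :
    M.IsHyperplane H ↔ H ⊆ M.E ∧ M.dual.Circuit (M.E \ H) := by
  rw [hM.isHyperplane_iff hpos]
  exact and_congr_right fun hHE ↦ (hM.dual_circuit_sdiff_iff hHE).symm

lemma IsPure.dual_paving_iff (hM : M.IsPure) (hpos : 0 < M.rk) :
    M.dual.Paving ↔ ∀ H, M.IsHyperplane H → H.card ≤ M.rk := by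
  have hdual := hM.rk_dual_add_rk
  refine ⟨fun h H hH ↦ ?_, fun h C hC ↦ ?_⟩
  · obtain ⟨hHE, hcirc⟩ := (hM.isHyperplane_iff_dual_circuit hpos).1 hH
    have := h _ hcirc
    have := Finset.card_sdiff_add_card_eq_card hHE
    omega
  · have hCE : C ⊆ M.E := hC.1
    have hhyp : M.IsHyperplane (M.E \ C) := (hM.isHyperplane_iff_dual_circuit hpos).2
      ⟨Finset.sdiff_subset, by rwa [Finset.sdiff_sdiff_eq_self hCE]⟩
    have := h _ hhyp
    have := Finset.card_sdiff_add_card_eq_card hCE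
    omega

end Dual

section CyclicHyperplanes

variable {C H : Finset α}

lemma Paving.circuit_of_card_eq_rk (hp : M.Paving) (hCE : C ⊆ M.E) (hcard : C.card = M.rk)
    (hC : ¬M.Indep C) : M.Circuit C :=
  ⟨hCE, hC, fun D hD ↦ paving_iff_forall_indep_of_card_lt.1 hp D (hD.subset.trans hCE)
    (hcard ▸ Finset.card_lt_card hD)⟩

lemma Paving.rk_le_card_of_isCyclicHyperplane (hp : M.Paving) (h2 : 2 ≤ M.rk)
    (hH : M.IsCyclicHyperplane H) : M.rk ≤ H.card := by
  have hrk : 1 ≤ M.rkSet H := by rw [hH.1.2]; omega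
  obtain ⟨x, hx⟩ : H.Nonempty := Finset.card_pos.1 (hrk.trans rkSet_le_card)
  obtain ⟨C, hC, hCH, -⟩ := hH.2 x hx
  exact (hp C hC).trans (Finset.card_le_card hCH)

lemma Paving.isCyclicHyperplane_of_rk_le_card (hp : M.Paving) (hpos : 0 < M.rk)
    (hH : M.IsHyperplane H) (hcard : M.rk ≤ H.card) : M.IsCyclicHyperplane H := by
  refine ⟨hH, fun x hx ↦ ?_⟩
  obtain ⟨C, hxC, hCH, hC⟩ := Finset.exists_subsuperset_card_eq
    (Finset.singleton_subset_iff.2 hx) (Finset.card_singleton x ▸ hpos) hcard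
  have hC_dep : ¬M.Indep C := fun hC_indep ↦ by
    have := hC_indep.card_le_rkSet hCH
    have := hH.2
    omega
  exact ⟨C, hp.circuit_of_card_eq_rk (hCH.trans hH.1.1) hC hC_dep, hCH,
    Finset.singleton_subset_iff.1 hxC⟩

theorem IsPure.sparsePaving_iff (hM : M.IsPure) (h2 : 2 ≤ M.rk) :
    M.SparsePaving ↔ M.Paving ∧ ∀ H, M.IsCyclicHyperplane H → H.card = M.rk := by
  have hpos : 0 < M.rk := by omega
  rw [SparsePaving, hM.dual_paving_iff hpos]
  refine and_congr_right fun hp ↦ ⟨fun h H hH ↦ ?_, fun h H hH ↦ ?_⟩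
  · exact (h H hH.1).antisymm (hp.rk_le_card_of_isCyclicHyperplane h2 hH)
  · by_contra! hcard
    exact hcard.ne' (h H (hp.isCyclicHyperplane_of_rk_le_card hpos hH hcard.le))

end CyclicHyperplanes

end PreMatroid

theorem stmt4_general {α : Type*} [DecidableEq α] (M : PreMatroid α) (hM : M.IsPure)
    (h3 : M.rk = 3) :
    M.SparsePaving ↔ (M.Simple ∧ ∀ H, M.IsCyclicHyperplane H → H.card = 3) := by
  rw [hM.sparsePaving_iff (by omega), paving_iff_simple hM.nonempty h3, h3]

theorem stmt4 {α : Type*} [DecidableEq α] (M : PreMatroid α) (hM : M.IsMatroid)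
    (h3 : M.rk = 3) :
    M.SparsePaving ↔ (M.Simple ∧ ∀ H, M.IsCyclicHyperplane H → H.card = 3) :=
  stmt4_general M hM.isPure h3

end MatroidGame
end

section
/- Let M and N be matroids without coloops with rk(M) = rk(N), and take S_M = C(M) and S_N = C(N) to be their collections of circuits. If the isomorphism algebra 𝔄•(M,N,C) is nonzero, then M is paving if and only if N is paving. -/
open scoped BigOperators TensorProduct

namespace MatroidGame

open PreMatroid

/-!
Fix a nonzero generator `u_{ax}` and a set of values of the relation. Since `u_{ax} u_{by} = 0` on
mismatches, summing `u_{ax} u_{by}` over the `b` and `y` whose relations to `a` and `x` lie in the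
set gives `u_{ax}` times the number of such `b` (rows sum to `1`), and also `u_{ax}` times the
number of such `y` (columns sum to `1`), so the two numbers agree. For pointed sets the even
values `0` and `2` mean equal underlying sets, so for them the two numbers are the sizes of the
sets of `a` and `x`.
As every row and column sums to `1 ≠ 0`, each contains a nonzero generator; thus the circuits of
both matroids have the same sizes, and being paving depends only on those sizes and the rank.
-/

theorem card_nsmul_eq_card_nsmul_of_mul_eq_zero {I J A : Type*} [Fintype I] [Fintype J]
    [NonAssocSemiring A] {u : I → J → A} {s : Finset I} {t : Finset J} {e : A}
    (hrow : ∀ b ∈ s, ∑ y, u b y = 1) (hcol : ∀ y ∈ t, ∑ b, u b y = 1)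
    (horth : ∀ b y, ¬(b ∈ s ↔ y ∈ t) → e * u b y = 0) :
    s.card • e = t.card • e := by
  have row_mul (b) (hb : b ∈ s) : ∑ y ∈ t, e * u b y = e := by
    rw [Finset.sum_subset t.subset_univ fun y _ hy => horth b y (by tauto),
      ← Finset.mul_sum, hrow b hb, mul_one]
  have col_mul (y) (hy : y ∈ t) : ∑ b ∈ s, e * u b y = e := by
    rw [Finset.sum_subset s.subset_univ fun b _ hb => horth b y (by tauto),
      ← Finset.mul_sum, hcol y hy, mul_one]
  calc s.card • e = ∑ b ∈ s, ∑ y ∈ t, e * u b y := by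
        rw [Finset.sum_congr rfl row_mul, Finset.sum_const]
    _ = ∑ y ∈ t, ∑ b ∈ s, e * u b y := Finset.sum_comm
    _ = t.card • e := by rw [Finset.sum_congr rfl col_mul, Finset.sum_const]

section IsoAlgebra

variable {I J : Type*} [Fintype I] [Fintype J] {rI : I → I → ℕ} {rJ : J → J → ℕ}

theorem sum_isoGen_row (a : I) : ∑ x, isoGen I J rI rJ a x = 1 := by
  simpa only [isoGen, map_sum, map_one] using
    RingQuot.mkAlgHom_rel ℂ (IsoRel.magic (rI := rI) (rJ := rJ) (MagicRel.rowSum a))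

theorem sum_isoGen_col (x : J) : ∑ a, isoGen I J rI rJ a x = 1 := by
  simpa only [isoGen, map_sum, map_one] using
    RingQuot.mkAlgHom_rel ℂ (IsoRel.magic (rI := rI) (rJ := rJ) (MagicRel.colSum x))

theorem isoGen_mul_isoGen_of_ne {a b : I} {x y : J} (h : rI a b ≠ rJ x y) :
    isoGen I J rI rJ a x * isoGen I J rI rJ b y = 0 := by
  simpa only [isoGen, map_mul, map_zero] using
    RingQuot.mkAlgHom_rel ℂ (IsoRel.mismatch a b x y h)

theorem exists_isoGen_ne_zero_row [Nontrivial (IsoAlgebra I J rI rJ)] (a : I) :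
    ∃ x, isoGen I J rI rJ a x ≠ 0 := by
  obtain ⟨x, -, hx⟩ :=
    Finset.exists_ne_zero_of_sum_ne_zero <|
      (sum_isoGen_row (rI := rI) (rJ := rJ) a).trans_ne one_ne_zero
  exact ⟨x, hx⟩

theorem exists_isoGen_ne_zero_col [Nontrivial (IsoAlgebra I J rI rJ)] (x : J) :
    ∃ a, isoGen I J rI rJ a x ≠ 0 := by
  obtain ⟨a, -, ha⟩ :=
    Finset.exists_ne_zero_of_sum_ne_zero <|
      (sum_isoGen_col (rI := rI) (rJ := rJ) x).trans_ne one_ne_zero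
  exact ⟨a, ha⟩

theorem card_filter_rel_eq_of_isoGen_ne_zero {a : I} {x : J} (h : isoGen I J rI rJ a x ≠ 0)
    (p : ℕ → Prop) [DecidablePred p] :
    (Finset.univ.filter fun b => p (rI a b)).card =
      (Finset.univ.filter fun y => p (rJ x y)).card := by
  have horth (b : I) (y : J) (hby : ¬(b ∈ Finset.univ.filter (fun b => p (rI a b)) ↔
      y ∈ Finset.univ.filter fun y => p (rJ x y))) :
      isoGen I J rI rJ a x * isoGen I J rI rJ b y = 0 := by
    simp only [Finset.mem_filter_univ] at hby
    exact isoGen_mul_isoGen_of_ne fun hr => hby (by rw [hr])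
  have hsmul := card_nsmul_eq_card_nsmul_of_mul_eq_zero
    (fun b _ => sum_isoGen_row b) (fun y _ => sum_isoGen_col y) horth
  simp only [← Nat.cast_smul_eq_nsmul ℂ] at hsmul
  exact Nat.cast_injective (smul_left_injective ℂ h hsmul)

end IsoAlgebra

section PointedSets

variable {α β : Type*} [DecidableEq α] [DecidableEq β]

theorem even_relNum {a b : Finset α × α} : Even (relNum a b) ↔ a.1 = b.1 := by
  unfold relNum
  split_ifs with hS <;> simp only [hS, iff_true, iff_false] <;> decide

variable [Fintype α] [Fintype β]

theorem card_filter_even_ptRel {S : Finset (Finset α)} (a : PtSet S) :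
    (Finset.univ.filter fun b => Even (ptRel S a b)).card = a.1.1.card := by
  simp only [ptRel, even_relNum]
  refine Finset.card_nbij (fun b => b.1.2) ?_ ?_ ?_
  · intro b hb
    rw [(Finset.mem_filter_univ b).1 hb]
    exact b.2.2
  · intro b hb c hc hpt
    have hbc : b.1.1 = c.1.1 :=
      ((Finset.mem_filter_univ b).1 hb).symm.trans ((Finset.mem_filter_univ c).1 hc)
    exact Subtype.ext (Prod.ext hbc hpt)
  · intro p hp
    exact ⟨⟨(a.1.1, p), a.2.1, hp⟩, by simp, rfl⟩

variable {S : Finset (Finset α)} {T : Finset (Finset β)}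

theorem card_eq_card_of_matGen_ne_zero {a : PtSet S} {x : PtSet T} (h : matGen S T a x ≠ 0) :
    a.1.1.card = x.1.1.card := by
  rw [← card_filter_even_ptRel a, ← card_filter_even_ptRel x]
  exact card_filter_rel_eq_of_isoGen_ne_zero h Even

theorem image_card_eq_of_nontrivial_matIsoAlgebra [Nontrivial (MatIsoAlgebra S T)]
    (hS : ∀ A ∈ S, A.Nonempty) (hT : ∀ B ∈ T, B.Nonempty) :
    S.image Finset.card = T.image Finset.card := by
  apply subset_antisymm <;> refine Finset.image_subset_iff.2 fun C hC => ?_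
  · obtain ⟨p, hp⟩ := hS C hC
    obtain ⟨x, hx⟩ := exists_isoGen_ne_zero_row (rI := ptRel S) (rJ := ptRel T) ⟨(C, p), hC, hp⟩
    exact Finset.mem_image.2 ⟨x.1.1, x.2.1, (card_eq_card_of_matGen_ne_zero hx).symm⟩
  · obtain ⟨p, hp⟩ := hT C hC
    obtain ⟨a, ha⟩ := exists_isoGen_ne_zero_col (rI := ptRel S) (rJ := ptRel T) ⟨(C, p), hC, hp⟩
    exact Finset.mem_image.2 ⟨a.1.1, a.2.1, card_eq_card_of_matGen_ne_zero ha⟩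

end PointedSets

namespace PreMatroid

variable {α : Type*} {M : PreMatroid α}

theorem Circuit.nonempty {C : Finset α} (hC : M.Circuit C) (hM : M.bases.Nonempty) :
    C.Nonempty := by
  obtain ⟨B, hB⟩ := hM
  rw [Finset.nonempty_iff_ne_empty]
  rintro rfl
  exact hC.2.1 ⟨B, hB, Finset.empty_subset B⟩

theorem paving_iff_forall_mem_image_card [DecidableEq α] {S : Finset (Finset α)}
    (hS : ∀ C, C ∈ S ↔ M.Circuit C) :
    M.Paving ↔ ∀ n ∈ S.image Finset.card, M.rk ≤ n := by
  simp only [Paving, Finset.forall_mem_image, hS]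

end PreMatroid

theorem stmt12_general {α β : Type*} [Fintype α] [Fintype β] [DecidableEq α] [DecidableEq β]
    (M : PreMatroid α) (N : PreMatroid β) (hM : M.bases.Nonempty) (hN : N.bases.Nonempty)
    (hrk : M.rk = N.rk)
    (S_M : Finset (Finset α)) (S_N : Finset (Finset β))
    (hSM : ∀ C, C ∈ S_M ↔ M.Circuit C) (hSN : ∀ C, C ∈ S_N ↔ N.Circuit C)
    (hnz : Nontrivial (MatIsoAlgebra S_M S_N)) :
    M.Paving ↔ N.Paving := by
  have hcard : S_M.image Finset.card = S_N.image Finset.card :=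
    image_card_eq_of_nontrivial_matIsoAlgebra
      (fun C hC => ((hSM C).1 hC).nonempty hM) (fun C hC => ((hSN C).1 hC).nonempty hN)
  rw [paving_iff_forall_mem_image_card hSM, paving_iff_forall_mem_image_card hSN, hcard, hrk]

theorem stmt12 {α β : Type*} [Fintype α] [Fintype β] [DecidableEq α] [DecidableEq β]
    (M : PreMatroid α) (N : PreMatroid β) (hM : M.IsMatroid) (hN : N.IsMatroid)
    (hCM : ∀ a, ¬M.IsColoop a) (hCN : ∀ a, ¬N.IsColoop a)
    (hrk : M.rk = N.rk)
    (S_M : Finset (Finset α)) (S_N : Finset (Finset β))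
    (hSM : ∀ C, C ∈ S_M ↔ M.Circuit C) (hSN : ∀ C, C ∈ S_N ↔ N.Circuit C)
    (hnz : Nontrivial (MatIsoAlgebra S_M S_N)) :
    M.Paving ↔ N.Paving :=
  stmt12_general M N hM.1 hN.1 hrk S_M S_N hSM hSN hnz

end MatroidGame
end
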